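/- Let X = (X_t)_{t≥0} be a real-valued additive process (X_0 = 0, independent increments, continuous in probability, cadlag paths) with E[X_t] = 0 and E[|X_t|^n] < ∞ for all n ≥ 1 and t ≥ 0. Then for every n ≥ 2 the cumulant function t ↦ F_n(t) has finite variation on every bounded interval [0, T]. -/

import Mathlib

open MeasureTheory ProbabilityTheory Filter Topology
open scoped NNReal

/-- The Kendall polynomials `Γ_n`, expressing moments in terms of cumulants:
`Γ_0 = 1` and `Γ_{n+1}(x_1,…,x_{n+1}) = Σ_{j=0}^n C(n,j) Γ_j(x_1,…,x_j) x_{n+1-j}`.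
The argument function `x : ℕ → ℝ` encodes the variables `x_1, x_2, …`
(only the values `x 1, …, x n` are used by `kendall n x`). -/
noncomputable def kendall : ℕ → (ℕ → ℝ) → ℝ
  | 0, _ => 1
  | n + 1, x =>
      ∑ j ∈ (Finset.range (n + 1)).attach,
        (n.choose j.1 : ℝ) * kendall j.1 x * x (n + 1 - j.1)
decreasing_by exact Finset.mem_range.mp j.2

/-- A function `f : ℝ≥0 → ℝ` is cadlag: right-continuous with left limits. -/
def IsCadlag (f : ℝ≥0 → ℝ) : Prop :=
  (∀ t : ℝ≥0, ContinuousWithinAt f (Set.Ici t) t) ∧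
    ∀ t : ℝ≥0, 0 < t → ∃ l : ℝ, Tendsto f (𝓝[<] t) (𝓝 l)

/-!
A centered process with independent increments is a martingale, so by the conditional Jensen
inequality `t ↦ E[φ(X_t)]` is nondecreasing for every convex `φ`. Since
`x ^ n = (x⁺) ^ n + (-1) ^ n (x⁻) ^ n` and both powers are convex, each moment `t ↦ E[X_t ^ n]` is
a sum or difference of two nondecreasing functions. The recurrence for the Kendall polynomials
expresses `F_n` as the `n`-th moment minus products of lower moments and lower cumulants, and
functions of locally bounded variation are stable under sums and products.
-/

section BoundedVariation

variable {α E : Type*} [LinearOrder α] [SeminormedAddCommGroup E] {s : Set α}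

theorem eVariationOn_add_le (f g : α → E) (s : Set α) :
    eVariationOn (f + g) s ≤ eVariationOn f s + eVariationOn g s := by
  refine iSup_le fun ⟨n, u, hu, hus⟩ => ?_
  calc ∑ i ∈ Finset.range n, edist ((f + g) (u (i + 1))) ((f + g) (u i))
      ≤ ∑ i ∈ Finset.range n,
          (edist (f (u (i + 1))) (f (u i)) + edist (g (u (i + 1))) (g (u i))) :=
        Finset.sum_le_sum fun _ _ => edist_add_add_le _ _ _ _
    _ = ∑ i ∈ Finset.range n, edist (f (u (i + 1))) (f (u i))
          + ∑ i ∈ Finset.range n, edist (g (u (i + 1))) (g (u i)) := Finset.sum_add_distrib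
    _ ≤ eVariationOn f s + eVariationOn g s :=
        add_le_add (eVariationOn.sum_le hu hus) (eVariationOn.sum_le hu hus)

theorem locallyBoundedVariationOn_const (c : E) (s : Set α) :
    LocallyBoundedVariationOn (fun _ => c) s := fun _ _ _ _ =>
  (eVariationOn.constant_on <| Set.subsingleton_singleton.anti <|
    Set.image_subset_iff.2 fun _ _ => Set.mem_singleton c).trans_ne ENNReal.zero_ne_top

theorem locallyBoundedVariationOn_add {f g : α → E} (hf : LocallyBoundedVariationOn f s)
    (hg : LocallyBoundedVariationOn g s) : LocallyBoundedVariationOn (f + g) s :=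
  fun a b ha hb => ne_top_of_le_ne_top (ENNReal.add_ne_top.2 ⟨hf a b ha hb, hg a b ha hb⟩)
    (eVariationOn_add_le f g _)

theorem locallyBoundedVariationOn_sum {ι : Type*} (u : Finset ι) {f : ι → α → E}
    (hf : ∀ i ∈ u, LocallyBoundedVariationOn (f i) s) :
    LocallyBoundedVariationOn (∑ i ∈ u, f i) s :=
  Finset.sum_induction f (LocallyBoundedVariationOn · s)
    (fun _ _ => locallyBoundedVariationOn_add) (locallyBoundedVariationOn_const 0 s) hf

theorem locallyBoundedVariationOn_const_mul (c : ℝ) {f : α → ℝ}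
    (hf : LocallyBoundedVariationOn f s) : LocallyBoundedVariationOn (fun t => c * f t) s :=
  (locallyBoundedVariationOn_const c s).mul hf

end BoundedVariation

section Kendall

theorem kendall_zero (x : ℕ → ℝ) : kendall 0 x = 1 := by
  rw [kendall]

theorem kendall_succ (n : ℕ) (x : ℕ → ℝ) :
    kendall (n + 1) x =
      ∑ j ∈ Finset.range (n + 1), (n.choose j : ℝ) * kendall j x * x (n + 1 - j) := by
  rw [kendall]
  exact Finset.sum_attach (Finset.range (n + 1))
    fun j => (n.choose j : ℝ) * kendall j x * x (n + 1 - j)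

theorem kendall_one (x : ℕ → ℝ) : kendall 1 x = x 1 := by
  simp [kendall_succ, kendall_zero]

theorem eq_kendall_sub_sum (n : ℕ) (x : ℕ → ℝ) :
    x (n + 1) = kendall (n + 1) x
      + ∑ j ∈ Finset.range n, -(n.choose (j + 1) : ℝ) * (kendall (j + 1) x * x (n - j)) := by
  rw [kendall_succ, Finset.sum_range_succ']
  simp [kendall_zero, mul_assoc]

theorem locallyBoundedVariationOn_of_kendall {α : Type*} [LinearOrder α] {s : Set α}
    {κ : ℕ → α → ℝ}
    (hκ : ∀ n, LocallyBoundedVariationOn (fun t => kendall n fun k => κ k t) s) (n : ℕ) :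
    LocallyBoundedVariationOn (κ (n + 1)) s := by
  induction n using Nat.strong_induction_on with
  | _ n ih =>
    have recurrence : κ (n + 1) = (fun t => kendall (n + 1) fun k => κ k t)
        + ∑ j ∈ Finset.range n, fun t =>
          -(n.choose (j + 1) : ℝ) * ((kendall (j + 1) fun k => κ k t) * κ (n - j) t) := by
      funext t
      simpa only [Pi.add_apply, Finset.sum_apply] using eq_kendall_sub_sum n fun k => κ k t
    rw [recurrence]
    refine locallyBoundedVariationOn_add (hκ _) (locallyBoundedVariationOn_sum _ fun j hj => ?_)
    have hjn : j < n := Finset.mem_range.1 hj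
    have lower : LocallyBoundedVariationOn (κ (n - j)) s := by
      simpa only [show n - j - 1 + 1 = n - j by omega] using ih (n - j - 1) (by omega)
    exact locallyBoundedVariationOn_const_mul _ ((hκ (j + 1)).mul lower)

end Kendall

theorem pow_eq_posPart_pow_add_negPart_pow {R : Type*} [CommRing R] [LinearOrder R]
    [IsOrderedRing R] (x : R) {n : ℕ} (hn : n ≠ 0) :
    x ^ n = x⁺ ^ n + (-1) ^ n * x⁻ ^ n := by
  rcases le_total 0 x with hx | hx
  · simp [posPart_of_nonneg hx, negPart_of_nonneg hx, hn]
  · simp [posPart_of_nonpos hx, negPart_of_nonpos hx, hn, ← mul_pow]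

theorem convexOn_posPart_pow (n : ℕ) : ConvexOn ℝ Set.univ fun x : ℝ => x⁺ ^ n :=
  ((convexOn_id convex_univ).sup (convexOn_const 0 convex_univ)).pow (fun x _ => posPart_nonneg x) n

theorem convexOn_negPart_pow (n : ℕ) : ConvexOn ℝ Set.univ fun x : ℝ => x⁻ ^ n :=
  ((concaveOn_id convex_univ).neg.sup (convexOn_const 0 convex_univ)).pow
    (fun x _ => negPart_nonneg x) n

section Martingale

variable {Ω ι E : Type*} {mΩ : MeasurableSpace Ω} {μ : Measure Ω} [NormedAddCommGroup E]
  [NormedSpace ℝ E]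

theorem martingale_of_indep_increments [Preorder ι] [CompleteSpace E] [MeasurableSpace E]
    [BorelSpace E] [SecondCountableTopology E] {ℱ : Filtration ι mΩ} [SigmaFiniteFiltration μ ℱ]
    {X : ι → Ω → E} (hadapted : StronglyAdapted ℱ X) (hint : ∀ t, Integrable (X t) μ)
    (hmean : ∀ s t, μ[X s] = μ[X t])
    (hindep : ∀ s t, s ≤ t →
      Indep (MeasurableSpace.comap (fun ω => X t ω - X s ω) inferInstance) (ℱ s) μ) :
    Martingale X ℱ μ := by
  refine ⟨hadapted, fun s t hst => ?_⟩
  have increment_meas : Measurable (X t - X s) :=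
    (((hadapted t).mono (ℱ.le t)).sub ((hadapted s).mono (ℱ.le s))).measurable
  have increment_condExp : μ[X t - X s | ℱ s] =ᵐ[μ] fun _ => μ[X t - X s] :=
    condExp_indep_eq increment_meas.comap_le (ℱ.le s)
      (comap_measurable _).stronglyMeasurable (hindep s t hst)
  have increment_mean : μ[X t - X s] = 0 := by
    rw [integral_sub' (hint t) (hint s), hmean t s, sub_self]
  filter_upwards [increment_condExp, condExp_sub (hint t) (hint s) (ℱ s)] with ω hω hsub
  rw [hω, increment_mean, Pi.sub_apply,
    condExp_of_stronglyMeasurable (ℱ.le s) (hadapted s) (hint s)] at hsub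
  exact sub_eq_zero.1 hsub.symm

theorem monotone_integral_of_submartingale [Preorder ι] {ℱ : Filtration ι mΩ}
    [SigmaFiniteFiltration μ ℱ] {Y : ι → Ω → ℝ} (hY : Submartingale Y ℱ μ) :
    Monotone fun t => ∫ ω, Y t ω ∂μ := fun s t hst => by
  simpa only [setIntegral_univ] using hY.setIntegral_le hst MeasurableSet.univ

theorem submartingale_convex_comp [Preorder ι] [FiniteDimensional ℝ E] {ℱ : Filtration ι mΩ}
    [SigmaFiniteFiltration μ ℱ] {X : ι → Ω → E} (hX : Martingale X ℱ μ) {φ : E → ℝ}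
    (hφ : ConvexOn ℝ Set.univ φ) (hint : ∀ t, Integrable (fun ω => φ (X t ω)) μ) :
    Submartingale (fun t ω => φ (X t ω)) ℱ μ := by
  have φ_continuous : Continuous φ := continuousOn_univ.1 (hφ.continuousOn isOpen_univ)
  have : CompleteSpace E := FiniteDimensional.complete ℝ E
  refine ⟨fun t => φ_continuous.comp_stronglyMeasurable (hX.stronglyMeasurable t),
    fun s t hst => ?_, hint⟩
  filter_upwards [hφ.map_condExp_le_of_finiteDimensional (ℱ.le s) (hX.integrable t) (hint t),
    hX.condExp_ae_eq hst] with ω jensen hω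
  rwa [Function.comp_apply, hω] at jensen

theorem locallyBoundedVariationOn_integral_convex_comp [LinearOrder ι] [FiniteDimensional ℝ E]
    {ℱ : Filtration ι mΩ} [SigmaFiniteFiltration μ ℱ] {X : ι → Ω → E} (hX : Martingale X ℱ μ)
    {φ : E → ℝ} (hφ : ConvexOn ℝ Set.univ φ) (hint : ∀ t, Integrable (fun ω => φ (X t ω)) μ) :
    LocallyBoundedVariationOn (fun t => ∫ ω, φ (X t ω) ∂μ) Set.univ :=
  (monotone_integral_of_submartingale
    (submartingale_convex_comp hX hφ hint)).monotoneOn _ |>.locallyBoundedVariationOn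

theorem locallyBoundedVariationOn_moment [LinearOrder ι] {ℱ : Filtration ι mΩ}
    [SigmaFiniteFiltration μ ℱ] {X : ι → Ω → ℝ} (hX : Martingale X ℱ μ) {n : ℕ}
    (hmom : ∀ t, Integrable (fun ω => |X t ω| ^ n) μ) :
    LocallyBoundedVariationOn (fun t => ∫ ω, X t ω ^ n ∂μ) Set.univ := by
  rcases eq_or_ne n 0 with rfl | hn
  · simpa only [pow_zero] using locallyBoundedVariationOn_const _ _
  have integrable_pow {φ : ℝ → ℝ} (hφ : Continuous φ) (hle : ∀ x, |φ x| ≤ |x|) (t : ι) :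
      Integrable (fun ω => φ (X t ω) ^ n) μ :=
    (hmom t).mono' ((hφ.pow n).comp_aestronglyMeasurable (hX.integrable t).aestronglyMeasurable)
      (.of_forall fun ω => by
        rw [Real.norm_eq_abs, abs_pow]
        exact pow_le_pow_left₀ (abs_nonneg _) (hle _) n)
  have integrable_posPart : ∀ t, Integrable (fun ω => (X t ω)⁺ ^ n) μ :=
    integrable_pow continuous_posPart fun x =>
      (abs_of_nonneg (posPart_nonneg x)).trans_le (sup_le (le_abs_self x) (abs_nonneg x))
  have integrable_negPart : ∀ t, Integrable (fun ω => (X t ω)⁻ ^ n) μ :=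
    integrable_pow continuous_negPart fun x =>
      (abs_of_nonneg (negPart_nonneg x)).trans_le (sup_le (neg_le_abs x) (abs_nonneg x))
  have decomposition : (fun t => ∫ ω, X t ω ^ n ∂μ) =
      (fun t => ∫ ω, (X t ω)⁺ ^ n ∂μ) + fun t => (-1) ^ n * ∫ ω, (X t ω)⁻ ^ n ∂μ := by
    funext t
    rw [Pi.add_apply, ← integral_const_mul,
      ← integral_add (integrable_posPart t) ((integrable_negPart t).const_mul _)]
    exact integral_congr_ae (.of_forall fun ω => pow_eq_posPart_pow_add_negPart_pow (X t ω) hn)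
  have posPart_moment : LocallyBoundedVariationOn (fun t => ∫ ω, (X t ω)⁺ ^ n ∂μ) Set.univ :=
    locallyBoundedVariationOn_integral_convex_comp (φ := fun x => x⁺ ^ n) hX
      (convexOn_posPart_pow n) integrable_posPart
  have negPart_moment : LocallyBoundedVariationOn (fun t => ∫ ω, (X t ω)⁻ ^ n ∂μ) Set.univ :=
    locallyBoundedVariationOn_integral_convex_comp (φ := fun x => x⁻ ^ n) hX
      (convexOn_negPart_pow n) integrable_negPart
  rw [decomposition]
  exact locallyBoundedVariationOn_add posPart_moment
    (locallyBoundedVariationOn_const_mul _ negPart_moment)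

end Martingale

theorem moment_eq_kendall_of_centered {Ω : Type*} {mΩ : MeasurableSpace Ω} {μ : Measure Ω}
    [IsProbabilityMeasure μ] {Y : Ω → ℝ} (hY : ∫ ω, Y ω ∂μ = 0) {κ : ℕ → ℝ}
    (hκ : ∀ n, 2 ≤ n → ∫ ω, Y ω ^ n ∂μ = kendall n fun k => if k = 1 then 0 else κ k) :
    ∀ n, ∫ ω, Y ω ^ n ∂μ = kendall n fun k => if k = 1 then 0 else κ k
  | 0 => by simp [kendall_zero]
  | 1 => by simpa [kendall_one] using hY
  | n + 2 => hκ (n + 2) (Nat.le_add_left 2 n)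

theorem additive_cumulant_boundedVariation_general {Ω ι : Type*} {mΩ : MeasurableSpace Ω}
    {μ : Measure Ω} [IsProbabilityMeasure μ] [LinearOrder ι] {ℱ : Filtration ι mΩ}
    {X : ι → Ω → ℝ} (hX : Martingale X ℱ μ)
    (hmom : ∀ n t, Integrable (fun ω => |X t ω| ^ n) μ) {κ : ℕ → ι → ℝ}
    (hκ : ∀ n t, ∫ ω, X t ω ^ n ∂μ = kendall n fun k => κ k t) {n : ℕ} (hn : n ≠ 0) (a b : ι) :
    BoundedVariationOn (κ n) (Set.Icc a b) := by
  obtain ⟨m, rfl⟩ := Nat.exists_eq_succ_of_ne_zero hn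
  have moments (k : ℕ) :
      LocallyBoundedVariationOn (fun t => kendall k fun j => κ j t) Set.univ := by
    simpa only [hκ] using locallyBoundedVariationOn_moment hX (hmom k)
  simpa only [Set.univ_inter] using
    locallyBoundedVariationOn_of_kendall moments m a b trivial trivial

/-- **Proposition 1 (finite variation).** The cumulant functions `F_n`, `n ≥ 2`, of a centered
additive process with finite moments of all orders have finite variation on every bounded
interval `[0, T]`. -/
theorem additive_cumulant_boundedVariation
    {Ω : Type*} {mΩ : MeasurableSpace Ω} (μ : Measure Ω) [IsProbabilityMeasure μ]
    (X : ℝ≥0 → Ω → ℝ) (hXmeas : ∀ t, StronglyMeasurable (X t))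
    (hX0 : ∀ ω, X 0 ω = 0)
    (hindep : ∀ s t : ℝ≥0, s ≤ t →
      Indep (MeasurableSpace.comap (fun ω => X t ω - X s ω) (inferInstance : MeasurableSpace ℝ))
        (MeasureTheory.Filtration.natural X hXmeas s) μ)
    (hcontP : ∀ (t : ℝ≥0) (ε : ℝ), 0 < ε →
      Tendsto (fun s => μ {ω | ε ≤ |X s ω - X t ω|}) (𝓝 t) (𝓝 0))
    (hcadlag : ∀ ω, IsCadlag fun t => X t ω)
    (hmom : ∀ (n : ℕ) (t : ℝ≥0), Integrable (fun ω => |X t ω| ^ n) μ)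
    (hcent : ∀ t : ℝ≥0, ∫ ω, X t ω ∂μ = 0)
    (F : ℕ → ℝ≥0 → ℝ)
    (hF : ∀ n, 2 ≤ n → ∀ t : ℝ≥0,
      ∫ ω, X t ω ^ n ∂μ = kendall n fun k => if k = 1 then 0 else F k t)
    (n : ℕ) (hn : 2 ≤ n) (T : ℝ≥0) :
    BoundedVariationOn (F n) (Set.Icc 0 T) := by
  have hX : Martingale X (Filtration.natural X hXmeas) μ :=
    martingale_of_indep_increments (Filtration.stronglyAdapted_natural hXmeas)
      (fun t => (integrable_norm_iff (hXmeas t).aestronglyMeasurable).1 (by simpa using hmom 1 t))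
      (fun s t => (hcent s).trans (hcent t).symm) hindep
  simpa only [if_neg (show n ≠ 1 by omega)] using additive_cumulant_boundedVariation_general hX hmom
    (fun m t => moment_eq_kendall_of_centered (hcent t) (fun k hk => hF k hk t) m)
    (show n ≠ 0 by omega) 0 T
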